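/- Let g(z,W) = 1/(a⁴+z⁴−2a²z²W) − 1/(1+a⁴z⁴−2a²z²W) for nonzero complex a, z. For nonzero complex variables z_1,…,z_M such that a⁴+z_i⁴−2a²z_i² ≠ 0 and 1+a⁴z_i⁴−2a²z_i² ≠ 0 for all i, the limit as (W_1,…,W_M) → (1,…,1) (along W_i pairwise distinct) of det_{M×M}(g(z_i,W_j)) / ∏_{1≤i<j≤M}(W_j−W_i) exists and equals det_{M×M}( (2a²z_i²)^{j−1}/(a⁴+z_i⁴−2a²z_i²)^j − (2a²z_i²)^{j−1}/(1+a⁴z_i⁴−2a²z_i²)^j ). -/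

import Mathlib

open Finset

/-- Extension of a tuple to a sequence. -/
noncomputable def extW {M : ℕ} (W : Fin M → ℂ) (l : ℕ) : ℂ :=
  if h : l < M then W ⟨l, h⟩ else 1

lemma extW_fin {M : ℕ} (W : Fin M → ℂ) (j : Fin M) : extW W j = W j := by
  simp [extW]

lemma extW_one {M : ℕ} (l : ℕ) : extW (fun _ : Fin M => (1 : ℂ)) l = 1 := by
  simp [extW]

lemma continuous_extW {M : ℕ} (l : ℕ) : Continuous (fun W : Fin M → ℂ => extW W l) := by
  unfold extW
  split_ifs
  · fun_prop
  · fun_prop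

/-- Newton interpolation of `1/(A - c x)` with remainder. -/
lemma newton_rem (A c x : ℂ) (w : ℕ → ℂ) (hw : ∀ l, A - c * w l ≠ 0) (hx : A - c * x ≠ 0)
    (n : ℕ) :
    (A - c * x)⁻¹ = (∑ k ∈ range n, c ^ k / (∏ l ∈ range (k + 1), (A - c * w l)) *
        ∏ l ∈ range k, (x - w l)) +
      c ^ n * (∏ l ∈ range n, (x - w l)) / ((∏ l ∈ range n, (A - c * w l)) * (A - c * x)) := by
  induction n with
  | zero => simp
  | succ n ih =>
    rw [ih, sum_range_succ, add_assoc]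
    congr 1
    have hp : ∏ l ∈ range n, (A - c * w l) ≠ 0 := prod_ne_zero_iff.mpr fun l _ => hw l
    have hn := hw n
    rw [prod_range_succ, prod_range_succ]
    generalize ∏ l ∈ range n, (A - c * w l) = P at *
    generalize ∏ l ∈ range n, (x - w l) = Q at *
    rw [pow_succ]
    field_simp
    ring

lemma newton_fin {M : ℕ} (A c : ℂ) (W : Fin M → ℂ) (hw : ∀ l, A - c * extW W l ≠ 0)
    (j : Fin M) :
    (A - c * W j)⁻¹ = ∑ k : Fin M, c ^ (k : ℕ) /
        (∏ l ∈ range ((k : ℕ) + 1), (A - c * extW W l)) *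
        ∏ l ∈ range (k : ℕ), (W j - extW W l) := by
  have h := newton_rem A c (W j) (extW W) hw (by simpa [extW_fin] using hw j) M
  have h0 : ∏ l ∈ range M, (W j - extW W l) = 0 :=
    prod_eq_zero (mem_range.mpr j.2) (by rw [extW_fin, sub_self])
  rw [h0, mul_zero, zero_div, add_zero] at h
  rw [h, Finset.sum_range]

lemma prod_pairs {M : ℕ} (W : Fin M → ℂ) :
    ∏ p ∈ Finset.univ.filter (fun p : Fin M × Fin M => p.1 < p.2), (W p.2 - W p.1) =
      ∏ j : Fin M, ∏ l ∈ range (j : ℕ), (W j - extW W l) := by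
  rw [prod_filter, Fintype.prod_prod_type_right]
  refine prod_congr rfl fun j _ => ?_
  have : ∏ l ∈ range (j : ℕ), (W j - extW W l) =
      ∏ l ∈ range M, if l < (j : ℕ) then (W j - extW W l) else 1 := by
    rw [← prod_filter]
    refine prod_congr ?_ fun _ _ => rfl
    ext l
    have := j.2
    simp only [mem_range, mem_filter]
    omega
  rw [this, Finset.prod_range]
  refine prod_congr rfl fun l _ => ?_
  simp [extW_fin]

lemma det_newton {M : ℕ} (W : Fin M → ℂ) :
    Matrix.det (Matrix.of fun k j : Fin M => ∏ l ∈ range (k : ℕ), (W j - extW W l)) =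
      ∏ p ∈ Finset.univ.filter (fun p : Fin M × Fin M => p.1 < p.2), (W p.2 - W p.1) := by
  rw [prod_pairs, Matrix.det_of_upperTriangular]
  · rfl
  · intro k j hkj
    exact prod_eq_zero (mem_range.mpr hkj) (by simp [extW_fin])

lemma eventually_ne {M : ℕ} (A c : ℂ) (h : A - c ≠ 0) :
    ∀ᶠ W in nhds (fun _ : Fin M => (1 : ℂ)), ∀ l, A - c * extW W l ≠ 0 := by
  have h3 : ∀ᶠ W in nhds (fun _ : Fin M => (1 : ℂ)), ∀ j : Fin M, A - c * W j ≠ 0 := by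
    rw [Filter.eventually_all]
    intro j
    have hc : Continuous (fun W : Fin M → ℂ => A - c * W j) := by fun_prop
    exact hc.continuousAt.eventually_ne (by simpa using h)
  filter_upwards [h3] with W hW l
  unfold extW
  split_ifs with hl
  · exact hW _
  · simpa using h

lemma tendsto_entry {M : ℕ} (A c : ℂ) (h : A - c ≠ 0) (k : ℕ) :
    Filter.Tendsto (fun W : Fin M → ℂ => c ^ k / (∏ l ∈ range (k + 1), (A - c * extW W l)))
      (nhds (fun _ => (1 : ℂ))) (nhds (c ^ k / (A - c) ^ (k + 1))) := by
  refine Filter.Tendsto.div tendsto_const_nhds ?_ (pow_ne_zero _ h)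
  have hc : Continuous (fun W : Fin M → ℂ => ∏ l ∈ range (k + 1), (A - c * extW W l)) :=
    continuous_finsetProd _ fun l _ => continuous_const.sub
      (continuous_const.mul (continuous_extW l))
  have := hc.tendsto (fun _ => (1 : ℂ))
  simpa [extW_one] using this

/-- The Izergin-Coker-Korepin style confluent (homogeneous) limit of the Cauchy-type
determinant appearing in the factor `P₂` in the proof of Theorem 6.3: for
`g(z,W) = 1/(a⁴+z⁴−2a²z²W) − 1/(1+a⁴z⁴−2a²z²W)`, the ratio
`det(g(z_i,W_j)) / ∏_{i<j}(W_j−W_i)` tends, as `(W_1,…,W_M) → (1,…,1)` along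
pairwise-distinct tuples, to the confluent determinant. -/
theorem confluent_determinant_limit (M : ℕ) (a : ℂ) (ha : a ≠ 0)
    (z : Fin M → ℂ) (hz : ∀ i, z i ≠ 0)
    (h1 : ∀ i, a ^ 4 + z i ^ 4 - 2 * a ^ 2 * z i ^ 2 ≠ 0)
    (h2 : ∀ i, 1 + a ^ 4 * z i ^ 4 - 2 * a ^ 2 * z i ^ 2 ≠ 0) :
    Filter.Tendsto
      (fun W : Fin M → ℂ =>
        Matrix.det (Matrix.of fun i j : Fin M =>
          (a ^ 4 + z i ^ 4 - 2 * a ^ 2 * z i ^ 2 * W j)⁻¹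
            - (1 + a ^ 4 * z i ^ 4 - 2 * a ^ 2 * z i ^ 2 * W j)⁻¹) /
        ∏ p ∈ Finset.univ.filter (fun p : Fin M × Fin M => p.1 < p.2), (W p.2 - W p.1))
      (nhdsWithin (fun _ => (1 : ℂ)) {W : Fin M → ℂ | ∀ i j, i ≠ j → W i ≠ W j})
      (nhds (Matrix.det (Matrix.of fun i j : Fin M =>
        (2 * a ^ 2 * z i ^ 2) ^ (j : ℕ) / (a ^ 4 + z i ^ 4 - 2 * a ^ 2 * z i ^ 2) ^ ((j : ℕ) + 1)
          - (2 * a ^ 2 * z i ^ 2) ^ (j : ℕ) /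
            (1 + a ^ 4 * z i ^ 4 - 2 * a ^ 2 * z i ^ 2) ^ ((j : ℕ) + 1)))) := by
  have hev : ∀ᶠ W in nhds (fun _ : Fin M => (1 : ℂ)), ∀ i,
      (∀ l, a ^ 4 + z i ^ 4 - 2 * a ^ 2 * z i ^ 2 * extW W l ≠ 0) ∧
      (∀ l, 1 + a ^ 4 * z i ^ 4 - 2 * a ^ 2 * z i ^ 2 * extW W l ≠ 0) := by
    rw [Filter.eventually_all]
    intro i
    exact (eventually_ne _ _ (h1 i)).and (eventually_ne _ _ (h2 i))
  have hlim : Filter.Tendsto (fun W : Fin M → ℂ => Matrix.det (Matrix.of fun i k : Fin M =>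
      (2 * a ^ 2 * z i ^ 2) ^ (k : ℕ) / (∏ l ∈ range ((k : ℕ) + 1),
          (a ^ 4 + z i ^ 4 - 2 * a ^ 2 * z i ^ 2 * extW W l)) -
      (2 * a ^ 2 * z i ^ 2) ^ (k : ℕ) / (∏ l ∈ range ((k : ℕ) + 1),
          (1 + a ^ 4 * z i ^ 4 - 2 * a ^ 2 * z i ^ 2 * extW W l))))
      (nhds (fun _ => (1 : ℂ))) (nhds (Matrix.det (Matrix.of fun i j : Fin M =>
        (2 * a ^ 2 * z i ^ 2) ^ (j : ℕ) / (a ^ 4 + z i ^ 4 - 2 * a ^ 2 * z i ^ 2) ^ ((j : ℕ) + 1)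
          - (2 * a ^ 2 * z i ^ 2) ^ (j : ℕ) /
            (1 + a ^ 4 * z i ^ 4 - 2 * a ^ 2 * z i ^ 2) ^ ((j : ℕ) + 1)))) := by
    refine ((continuous_id.matrix_det).tendsto _).comp ?_
    refine tendsto_pi_nhds.mpr fun i => tendsto_pi_nhds.mpr fun k => ?_
    exact (tendsto_entry _ _ (h1 i) k).sub (tendsto_entry _ _ (h2 i) k)
  refine (hlim.mono_left nhdsWithin_le_nhds).congr' ?_
  filter_upwards [nhdsWithin_le_nhds hev, self_mem_nhdsWithin] with W hW hinj
  have hne : ∏ p ∈ Finset.univ.filter (fun p : Fin M × Fin M => p.1 < p.2),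
      (W p.2 - W p.1) ≠ 0 := by
    refine prod_ne_zero_iff.mpr fun p hp => sub_ne_zero.mpr ?_
    exact hinj _ _ (ne_of_gt (mem_filter.mp hp).2)
  rw [eq_div_iff hne, ← det_newton, ← Matrix.det_mul]
  congr 1
  ext i j
  rw [Matrix.mul_apply]
  simp only [Matrix.of_apply]
  rw [newton_fin _ _ W (hW i).1 j, newton_fin _ _ W (hW i).2 j, ← sum_sub_distrib]
  exact sum_congr rfl fun k _ => sub_mul _ _ _
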